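/- Let X be a real Hilbert space and K a compact subset of X. For any elements v_1, …, v_n ∈ K, letting P_0 = 0 and P_k denote the orthogonal projection onto span{v_1,…,v_k}, one has (∏_{k=1}^n ‖v_k − P_{k−1} v_k‖)^{1/n} ≤ (n! V_n)^{1/n} · ε_n(co(K)). -/

import Mathlib

open scoped RealInnerProductSpace

/-- Dyadic entropy number: infimum of all `ε > 0` such that `K` is covered by `2^n`
balls of radius `ε`. -/
noncomputable def entropyNumber {X : Type*} [NormedAddCommGroup X] (n : ℕ) (K : Set X) : ℝ :=
  sInf {ε : ℝ | 0 < ε ∧ ∃ c : Fin (2 ^ n) → X, K ⊆ ⋃ i, Metric.closedBall (c i) ε}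

/-- Symmetric (absolutely) convex hull: closure of the set of finite sums `∑ cᵢ gᵢ`
with `gᵢ ∈ K` and `∑ |cᵢ| ≤ 1`. -/
noncomputable def symConvexHull {X : Type*} [NormedAddCommGroup X] [NormedSpace ℝ X]
    (K : Set X) : Set X :=
  closure {x : X | ∃ (m : ℕ) (c : Fin m → ℝ) (g : Fin m → X),
    (∀ i, g i ∈ K) ∧ (∑ i, |c i|) ≤ 1 ∧ x = ∑ i, c i • g i}

/-- Volume of the unit Euclidean ball in `ℝⁿ`. -/
noncomputable def unitBallVol (n : ℕ) : ℝ :=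
  Real.pi ^ ((n : ℝ) / 2) / Real.Gamma ((n : ℝ) / 2 + 1)

/-- Span of the first `n` terms of a sequence. -/
noncomputable def spanFirst {X : Type*} [NormedAddCommGroup X] [NormedSpace ℝ X]
    (f : ℕ → X) (n : ℕ) : Submodule ℝ X :=
  Submodule.span ℝ (f '' {i | i < n})

/-- The weak greedy algorithm with parameter `γ`: `f n` (the `(n+1)`-st iterate) lies in `K`
and its distance to the span of the previous iterates is at least `γ` times that of any
other element of `K`. -/
def IsWeakGreedy {X : Type*} [NormedAddCommGroup X] [NormedSpace ℝ X]
    (γ : ℝ) (K : Set X) (f : ℕ → X) : Prop :=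
  ∀ n : ℕ, f n ∈ K ∧ ∀ g ∈ K,
    γ * Metric.infDist g (spanFirst f n : Set X) ≤ Metric.infDist (f n) (spanFirst f n : Set X)

/-- The greedy error `σ_n(K) = sup_{f ∈ K} dist(f, span{f_1,…,f_n})`. -/
noncomputable def greedyError {X : Type*} [NormedAddCommGroup X] [NormedSpace ℝ X]
    (K : Set X) (f : ℕ → X) (n : ℕ) : ℝ :=
  sSup ((fun g => Metric.infDist g (spanFirst f n : Set X)) '' K)

/-- Kolmogorov `n`-width. -/
noncomputable def kolmogorovWidth {X : Type*} [NormedAddCommGroup X] [NormedSpace ℝ X]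
    (n : ℕ) (K : Set X) : ℝ :=
  sInf {d : ℝ | ∃ Y : Submodule ℝ X, FiniteDimensional ℝ Y ∧ Module.finrank ℝ Y ≤ n ∧
    d = sSup ((fun g => Metric.infDist g (Y : Set X)) '' K)}

/-- `f` admits an `ℓ¹` representation over the dictionary `D`. -/
def HasL1Rep {X : Type*} [NormedAddCommGroup X] [NormedSpace ℝ X] (D : Set X) (f : X) : Prop :=
  ∃ (c : ℕ → ℝ) (g : ℕ → X), (∀ i, g i ∈ D) ∧ Summable (fun i => |c i|) ∧
    HasSum (fun i => c i • g i) f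

/-- The variation norm `‖f‖_{L₁(D)}`. -/
noncomputable def varNorm {X : Type*} [NormedAddCommGroup X] [NormedSpace ℝ X]
    (D : Set X) (f : X) : ℝ :=
  sInf {t : ℝ | ∃ (c : ℕ → ℝ) (g : ℕ → X), (∀ i, g i ∈ D) ∧ Summable (fun i => |c i|) ∧
    HasSum (fun i => c i • g i) f ∧ t = ∑' i, |c i|}

/-- The orthogonal greedy algorithm with target `f`: `fa 0 = 0`; at each step `g n ∈ D`
maximizes `|⟨g, f - fa n⟩|` over `D`, and `fa (n+1)` is the orthogonal projection of `f`
onto `span{g 0, …, g n}`. -/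
def IsOGA {X : Type*} [NormedAddCommGroup X] [InnerProductSpace ℝ X]
    (D : Set X) (f : X) (g fa : ℕ → X) : Prop :=
  fa 0 = 0 ∧ ∀ n : ℕ,
    g n ∈ D ∧ (∀ h ∈ D, |⟪h, f - fa n⟫| ≤ |⟪g n, f - fa n⟫|) ∧
    fa (n + 1) ∈ Submodule.span ℝ (g '' {i | i ≤ n}) ∧
    ∀ w ∈ Submodule.span ℝ (g '' {i | i ≤ n}), ⟪f - fa (n + 1), w⟫ = 0

/-- Best `n`-term approximation error `E_n(f, D)`. -/
noncomputable def bestNTermError {X : Type*} [NormedAddCommGroup X] [NormedSpace ℝ X]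
    (D : Set X) (n : ℕ) (f : X) : ℝ :=
  sInf {r : ℝ | ∃ (c : Fin n → ℝ) (g : Fin n → X), (∀ i, g i ∈ D) ∧ r = ‖f - ∑ i, c i • g i‖}

/-- The K-functional `K(t, g)` between `X` and `L₁(D)`. -/
noncomputable def Kfunctional {X : Type*} [NormedAddCommGroup X] [NormedSpace ℝ X]
    (D : Set X) (t : ℝ) (gg : X) : ℝ :=
  sInf {s : ℝ | ∃ h : X, HasL1Rep D h ∧ s = ‖gg - h‖ + t * varNorm D h}

/-- The interpolation norm `‖g‖_θ = sup_{t > 0} t^{-θ} K(t, g)`. -/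
noncomputable def interpNorm {X : Type*} [NormedAddCommGroup X] [NormedSpace ℝ X]
    (D : Set X) (θ : ℝ) (gg : X) : ℝ :=
  sSup ((fun t => t ^ (-θ) * Kfunctional D t gg) '' Set.Ioi (0 : ℝ))

/-!
Compare volumes. In the coordinates given by the normalised Gram–Schmidt vectors of `v`, the vectors
`v k` form an upper triangular matrix whose diagonal entries are their distances to the spans of
their predecessors. The image of the cross-polytope under this matrix, whose volume is `2 ^ n / n!`
times the product of those distances, consists of coordinate vectors of points of
`symConvexHull K`. By Bessel's inequality the coordinate map does not increase distances, so a cover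
of `symConvexHull K` by `2 ^ n` balls of radius `ε` yields a cover of this image by as many
Euclidean balls, of total volume `2 ^ n * unitBallVol n * ε ^ n`.

When the `v k` are linearly dependent, the vanishing Gram–Schmidt vectors are normalised to `0`.
Bessel's inequality still holds, so this case needs no separate treatment.
-/

open Fintype InnerProductSpace MeasureTheory Metric Submodule

section SymConvexHull

variable {X : Type*} [NormedAddCommGroup X] [NormedSpace ℝ X] {K : Set X}

lemma sum_smul_mem_symConvexHull {ι : Type*} [Fintype ι] {v : ι → X} (hv : ∀ i, v i ∈ K)
    {a : ι → ℝ} (ha : ∑ i, |a i| ≤ 1) : ∑ i, a i • v i ∈ symConvexHull K := by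
  let e := (equivFin ι).symm
  refine subset_closure ⟨card ι, a ∘ e, v ∘ e, fun i => hv (e i), ?_, ?_⟩
  · exact (e.sum_comp fun i => |a i|).trans_le ha
  · exact (e.sum_comp fun i => a i • v i).symm

lemma symConvexHull_subset_closedBall {R : ℝ} (hR : 0 ≤ R) (hK : K ⊆ closedBall 0 R) :
    symConvexHull K ⊆ closedBall 0 R := by
  refine closure_minimal ?_ isClosed_closedBall
  rintro _ ⟨m, a, g, hg, ha, rfl⟩
  rw [mem_closedBall_zero_iff]
  calc
    ‖∑ i, a i • g i‖ ≤ ∑ i, |a i| * R := norm_sum_le_of_le _ fun i _ => by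
      rw [norm_smul, Real.norm_eq_abs]
      gcongr
      exact mem_closedBall_zero_iff.1 (hK (hg i))
    _ = (∑ i, |a i|) * R := (Finset.sum_mul ..).symm
    _ ≤ R := mul_le_of_le_one_left hR ha

lemma isBounded_symConvexHull (hK : Bornology.IsBounded K) :
    Bornology.IsBounded (symConvexHull K) := by
  obtain ⟨R, hR, hKR⟩ := hK.subset_closedBall_lt 0 0
  exact isBounded_closedBall.subset (symConvexHull_subset_closedBall hR.le hKR)

end SymConvexHull

lemma le_entropyNumber {X : Type*} [NormedAddCommGroup X] {S : Set X}
    (hS : Bornology.IsBounded S) {n : ℕ} {r : ℝ}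
    (hr : ∀ ε > 0, ∀ c : Fin (2 ^ n) → X, S ⊆ ⋃ k, closedBall (c k) ε → r ≤ ε) :
    r ≤ entropyNumber n S := by
  obtain ⟨R, hR, hSR⟩ := hS.subset_closedBall_lt 0 0
  refine le_csInf ⟨R, hR, 0, hSR.trans ?_⟩ fun ε ⟨hε, c, hc⟩ => hr ε hε c hc
  exact Set.subset_iUnion (fun _ : Fin (2 ^ n) => closedBall (0 : X) R) 0

section Volume

lemma unitBallVol_pos (n : ℕ) : 0 < unitBallVol n :=
  div_pos (Real.rpow_pos_of_pos Real.pi_pos _) (Real.Gamma_pos_of_pos (by positivity))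

lemma measure_le_card_mul_of_subset_iUnion_closedBall {E κ : Type*} [NormedAddCommGroup E]
    [MeasurableSpace E] [BorelSpace E] (μ : Measure E) [μ.IsAddHaarMeasure] [Fintype κ] {S : Set E}
    {c : κ → E} {ε : ℝ} (hS : S ⊆ ⋃ k, closedBall (c k) ε) :
    μ S ≤ card κ * μ (closedBall 0 ε) :=
  calc
    μ S ≤ ∑ k, μ (closedBall (c k) ε) := (measure_mono hS).trans (measure_iUnion_fintype_le _ _)
    _ = card κ * μ (closedBall 0 ε) := by
      simp only [μ.addHaar_closedBall_center, Finset.sum_const, Finset.card_univ, nsmul_eq_mul]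

/-- The closed unit ball of the `ℓ¹` norm, as a subset of Euclidean space so that its volume can be
compared with that of Euclidean balls. -/
def crossPolytope (ι : Type*) [Fintype ι] : Set (EuclideanSpace ℝ ι) :=
  {a | ∑ i, |a i| ≤ 1}

variable {ι : Type*} [Fintype ι] [Nonempty ι]

lemma volume_crossPolytope :
    volume (crossPolytope ι) = ENNReal.ofReal (2 ^ card ι / (card ι).factorial) := by
  have hmeas : MeasurableSet {a : ι → ℝ | ∑ i, |a i| ≤ 1} :=
    measurableSet_le (by fun_prop) measurable_const
  calc
    volume (crossPolytope ι) = volume {a : ι → ℝ | ∑ i, |a i| ≤ 1} :=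
      (PiLp.volume_preserving_ofLp ι).measure_preimage hmeas.nullMeasurableSet
    _ = ENNReal.ofReal (2 ^ card ι / (card ι).factorial) := by
      simpa [one_add_one_eq_two, Real.Gamma_nat_eq_factorial] using
        volume_sum_rpow_le ι le_rfl (1 : ℝ)

lemma volume_closedBall_eq_pow_mul_unitBallVol (x : EuclideanSpace ℝ ι) {r : ℝ} (hr : 0 ≤ r) :
    volume (closedBall x r) = ENNReal.ofReal (r ^ card ι * unitBallVol (card ι)) := by
  rw [EuclideanSpace.volume_closedBall, ← ENNReal.ofReal_pow hr,
    ← ENNReal.ofReal_mul (by positivity), unitBallVol, Real.sqrt_eq_rpow,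
    ← Real.rpow_mul_natCast Real.pi_nonneg, one_div_mul_eq_div]

lemma abs_det_le_of_image_crossPolytope_subset {κ : Type*} [Fintype κ]
    (L : EuclideanSpace ℝ ι →ₗ[ℝ] EuclideanSpace ℝ ι) {c : κ → EuclideanSpace ℝ ι} {ε : ℝ}
    (hε : 0 ≤ ε) (hL : L '' crossPolytope ι ⊆ ⋃ k, closedBall (c k) ε) :
    |L.det| ≤ (card ι).factorial * unitBallVol (card ι) * (card κ / 2 ^ card ι * ε ^ card ι) := by
  have hV := unitBallVol_pos (card ι)
  have hvol : |L.det| * (2 ^ card ι / (card ι).factorial) ≤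
      card κ * (ε ^ card ι * unitBallVol (card ι)) := by
    have h := measure_le_card_mul_of_subset_iUnion_closedBall volume hL
    rwa [Measure.addHaar_image_linearMap, volume_crossPolytope,
      volume_closedBall_eq_pow_mul_unitBallVol 0 hε, ← ENNReal.ofReal_mul (abs_nonneg _),
      ← ENNReal.ofReal_natCast, ← ENNReal.ofReal_mul (Nat.cast_nonneg _),
      ENNReal.ofReal_le_ofReal_iff (by positivity)] at h
  rw [mul_div_assoc', div_le_iff₀ (by positivity), ← le_div_iff₀ (by positivity)] at hvol
  refine hvol.trans_eq ?_
  ring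

variable [DecidableEq ι] {X : Type*} [NormedAddCommGroup X] [NormedSpace ℝ X]

lemma abs_det_le_of_symConvexHull_subset {κ : Type*} [Fintype κ]
    (T : X →ₗ[ℝ] EuclideanSpace ℝ ι) (hT : ∀ x, ‖T x‖ ≤ ‖x‖) {K : Set X} {v : ι → X}
    (hv : ∀ i, v i ∈ K) {c : κ → X} {ε : ℝ} (hε : 0 ≤ ε)
    (hc : symConvexHull K ⊆ ⋃ k, closedBall (c k) ε) :
    |(Matrix.of fun i j => T (v j) i).det| ≤
      (card ι).factorial * unitBallVol (card ι) * (card κ / 2 ^ card ι * ε ^ card ι) := by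
  rw [← LinearMap.det_toLpLin 2]
  refine abs_det_le_of_image_crossPolytope_subset _ (c := fun k => T (c k)) hε ?_
  rintro _ ⟨a, ha, rfl⟩
  have hTa : (Matrix.of fun i j => T (v j) i).toLpLin 2 2 a = T (∑ j, a j • v j) := by
    ext i
    simp [Matrix.toLpLin_apply, Matrix.mulVec, dotProduct, mul_comm]
  obtain ⟨k, hk⟩ := Set.mem_iUnion.1 (hc (sum_smul_mem_symConvexHull hv ha))
  rw [mem_closedBall_iff_norm] at hk
  refine Set.mem_iUnion.2 ⟨k, ?_⟩
  rw [hTa, mem_closedBall_iff_norm, ← map_sub]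
  exact (hT _).trans hk

end Volume

section GramSchmidt

variable {𝕜 X ι : Type*} [RCLike 𝕜] [NormedAddCommGroup X] [InnerProductSpace 𝕜 X]

lemma infDist_eq_norm_sub_starProjection (U : Submodule 𝕜 X) [U.HasOrthogonalProjection] (x : X) :
    infDist x (U : Set X) = ‖x - U.starProjection x‖ := by
  simp only [starProjection_minimal, infDist_eq_iInf, dist_eq_norm, SetLike.coe_sort_coe]

variable [LinearOrder ι] [LocallyFiniteOrderBot ι] [WellFoundedLT ι] (v : ι → X)

lemma sub_gramSchmidt_mem_span_Iio (k : ι) :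
    v k - gramSchmidt 𝕜 v k ∈ span 𝕜 (v '' Set.Iio k) := by
  rw [← span_gramSchmidt_Iio 𝕜 v k, gramSchmidt_def, sub_sub_cancel]
  simp_rw [starProjection_singleton]
  exact sum_mem fun i hi => smul_mem _ _ <|
    subset_span <| Set.mem_image_of_mem _ (Finset.mem_Iio.1 hi)

lemma gramSchmidt_mem_orthogonal_span_Iio (k : ι) :
    gramSchmidt 𝕜 v k ∈ (span 𝕜 (v '' Set.Iio k))ᗮ := by
  refine (span_singleton_le_iff_mem _ _).1 (isOrtho_span.2 ?_)
  rintro _ rfl _ ⟨i, hi, rfl⟩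
  exact gramSchmidt_inv_triangular 𝕜 v hi

lemma infDist_span_Iio_eq_norm_gramSchmidt (k : ι) :
    infDist (v k) (span 𝕜 (v '' Set.Iio k) : Set X) = ‖gramSchmidt 𝕜 v k‖ := by
  have : FiniteDimensional 𝕜 (span 𝕜 (v '' Set.Iio k)) :=
    .span_of_finite 𝕜 ((Set.finite_Iio k).image v)
  rw [infDist_eq_norm_sub_starProjection,
    eq_starProjection_of_mem_orthogonal (sub_gramSchmidt_mem_span_Iio v k), sub_sub_cancel]
  rw [sub_sub_cancel]
  exact gramSchmidt_mem_orthogonal_span_Iio v k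

lemma inner_gramSchmidt_self (k : ι) :
    inner 𝕜 (gramSchmidt 𝕜 v k) (v k) = (‖gramSchmidt 𝕜 v k‖ : 𝕜) ^ 2 := by
  rw [← inner_self_eq_norm_sq_to_K, ← sub_eq_zero, ← inner_sub_right]
  exact (mem_orthogonal' _ _).1 (gramSchmidt_mem_orthogonal_span_Iio v k) _
    (sub_gramSchmidt_mem_span_Iio v k)

lemma inner_gramSchmidtNormed_self (k : ι) :
    inner 𝕜 (gramSchmidtNormed 𝕜 v k) (v k) = ‖gramSchmidt 𝕜 v k‖ := by
  rw [gramSchmidtNormed, inner_smul_left, inner_gramSchmidt_self, map_inv₀, RCLike.conj_ofReal,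
    pow_two, ← mul_assoc, inv_mul_mul_self]

lemma inner_gramSchmidtNormed_eq_zero {j k : ι} (hjk : j < k) :
    inner 𝕜 (gramSchmidtNormed 𝕜 v k) (v j) = 0 := by
  rw [gramSchmidtNormed, inner_smul_left, gramSchmidt_inv_triangular 𝕜 v hjk, mul_zero]

lemma tsum_norm_inner_gramSchmidtNormed_sq_le (x : X) :
    ∑' i, ‖inner 𝕜 (gramSchmidtNormed 𝕜 v i) x‖ ^ 2 ≤ ‖x‖ ^ 2 := by
  rw [← tsum_subtype_eq_of_support_subset (s := {i | gramSchmidtNormed 𝕜 v i ≠ 0})]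
  · exact (gramSchmidtNormed_orthonormal' v).tsum_inner_products_le x
  · intro i hi h
    simp [h] at hi

variable (𝕜) in
/-- The coordinates `⟪eᵢ, x⟫` of `x` along the normalised Gram–Schmidt vectors `eᵢ` of `v`, which
move the volume comparison from `X` to Euclidean space. The coordinate is `0` wherever the
Gram–Schmidt vector vanishes. -/
noncomputable def gramSchmidtCoords : X →ₗ[𝕜] EuclideanSpace 𝕜 ι :=
  (WithLp.linearEquiv 2 𝕜 (ι → 𝕜)).symm.toLinearMap ∘ₗ
    LinearMap.pi fun i => innerₛₗ 𝕜 (gramSchmidtNormed 𝕜 v i)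

lemma gramSchmidtCoords_apply (x : X) (i : ι) :
    gramSchmidtCoords 𝕜 v x i = inner 𝕜 (gramSchmidtNormed 𝕜 v i) x :=
  rfl

variable [Fintype ι]

lemma norm_gramSchmidtCoords_le (x : X) : ‖gramSchmidtCoords 𝕜 v x‖ ≤ ‖x‖ := by
  refine le_of_sq_le_sq ?_ (norm_nonneg x)
  simpa only [EuclideanSpace.norm_sq_eq, gramSchmidtCoords_apply, tsum_fintype] using
    tsum_norm_inner_gramSchmidtNormed_sq_le v x

lemma det_gramSchmidtCoords :
    (Matrix.of fun i j => gramSchmidtCoords 𝕜 v (v j) i).det =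
      ∏ k, (infDist (v k) (span 𝕜 (v '' Set.Iio k) : Set X) : 𝕜) := by
  rw [Matrix.det_of_isUpperTriangular]
  · simp only [Matrix.of_apply, gramSchmidtCoords_apply, inner_gramSchmidtNormed_self,
      infDist_span_Iio_eq_norm_gramSchmidt]
  · exact fun k j hjk => inner_gramSchmidtNormed_eq_zero v hjk

end GramSchmidt

lemma prod_infDist_span_Iio_le_of_symConvexHull_subset {X ι κ : Type*} [NormedAddCommGroup X]
    [InnerProductSpace ℝ X] [Fintype ι] [Nonempty ι] [LinearOrder ι] [LocallyFiniteOrderBot ι]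
    [Fintype κ] {K : Set X} {v : ι → X} (hv : ∀ i, v i ∈ K) {c : κ → X} {ε : ℝ} (hε : 0 ≤ ε)
    (hc : symConvexHull K ⊆ ⋃ k, closedBall (c k) ε) :
    ∏ k, infDist (v k) (span ℝ (v '' Set.Iio k) : Set X) ≤
      (card ι).factorial * unitBallVol (card ι) * (card κ / 2 ^ card ι * ε ^ card ι) :=
  calc
    _ = (Matrix.of fun i j => gramSchmidtCoords ℝ v (v j) i).det := (det_gramSchmidtCoords v).symm
    _ ≤ |(Matrix.of fun i j => gramSchmidtCoords ℝ v (v j) i).det| := le_abs_self _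
    _ ≤ _ := abs_det_le_of_symConvexHull_subset _ (norm_gramSchmidtCoords_le v) hv hε hc

theorem geometric_mean_projection_error_le_entropy_general {X : Type*} [NormedAddCommGroup X]
    [InnerProductSpace ℝ X] {K : Set X} (hK : Bornology.IsBounded K) {n : ℕ} (hn : 1 ≤ n)
    {v : Fin n → X} (hv : ∀ k, v k ∈ K) :
    (∏ k, infDist (v k) (span ℝ (v '' Set.Iio k) : Set X)) ^ (n : ℝ)⁻¹ ≤
      (n.factorial * unitBallVol n) ^ (n : ℝ)⁻¹ * entropyNumber n (symConvexHull K) := by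
  have : NeZero n := ⟨Nat.one_le_iff_ne_zero.1 hn⟩
  have hC : 0 < n.factorial * unitBallVol n :=
    mul_pos (Nat.cast_pos.2 n.factorial_pos) (unitBallVol_pos n)
  rw [← div_le_iff₀' (Real.rpow_pos_of_pos hC _)]
  refine le_entropyNumber (isBounded_symConvexHull hK) fun ε hε c hc => ?_
  rw [div_le_iff₀' (Real.rpow_pos_of_pos hC _)]
  have hprod : ∏ k, infDist (v k) (span ℝ (v '' Set.Iio k) : Set X) ≤
      n.factorial * unitBallVol n * ε ^ n := by
    simpa using prod_infDist_span_Iio_le_of_symConvexHull_subset hv hε.le hc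
  calc
    (∏ k, infDist (v k) (span ℝ (v '' Set.Iio k) : Set X)) ^ (n : ℝ)⁻¹
      ≤ (n.factorial * unitBallVol n * ε ^ n) ^ (n : ℝ)⁻¹ :=
        Real.rpow_le_rpow (Finset.prod_nonneg fun _ _ => infDist_nonneg) hprod (by positivity)
    _ = (n.factorial * unitBallVol n) ^ (n : ℝ)⁻¹ * ε := by
      rw [Real.mul_rpow hC.le (by positivity), Real.pow_rpow_inv_natCast hε.le (NeZero.ne n)]

/-- entropy-based bound for the geometric mean of projection errors
(Lemma 2.1 of the paper). -/
theorem geometric_mean_projection_error_le_entropy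
    {X : Type*} [NormedAddCommGroup X] [InnerProductSpace ℝ X] [CompleteSpace X]
    (K : Set X) (hK : IsCompact K) (n : ℕ) (hn : 1 ≤ n)
    (v : Fin n → X) (hv : ∀ k, v k ∈ K) :
    (∏ k : Fin n, Metric.infDist (v k) ((Submodule.span ℝ (v '' {j | j < k}) : Submodule ℝ X) : Set X))
        ^ ((n : ℝ)⁻¹)
      ≤ ((n.factorial : ℝ) * unitBallVol n) ^ ((n : ℝ)⁻¹) *
          entropyNumber n (symConvexHull K) :=
  geometric_mean_projection_error_le_entropy_general hK.isBounded hn hv
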